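/- For every positive integer m, the following identities of polynomials with rational coefficients hold: Q_m(x) = P_m(x) − P_{m−1}(x); x·P_{m−1}(x) = Q_m(x) − Q_{m−1}(x); 𝒬_m(x) = 𝒫_m(x) + 𝒬_{m−1}(x); x·𝒬_{m−1}(x) = 𝒫_m(x) − 𝒫_{m−1}(x); 𝒫_m(x) = (−1)^m · P_m(−4−x); and (2m+1)·𝒫_m(x) = P_m(x) + 2x·P_m′(x), where P_m′ denotes the formal derivative of P_m. -/

import Mathlib

open Polynomial Finset

/-- `P_m(x) = Σ_{k=0}^{m} ((2m+1)/(2k+1))·binom(m+k,2k)·x^k`. -/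
noncomputable def Ppoly (m : ℕ) : Polynomial ℚ :=
  ∑ k ∈ Finset.range (m + 1),
    Polynomial.C ((2 * m + 1 : ℚ) / (2 * k + 1) * (Nat.choose (m + k) (2 * k))) * Polynomial.X ^ k

/-- `Q_m(x) = 2 + Σ_{k=1}^{m} (m/k)·binom(m+k−1,2k−1)·x^k`. -/
noncomputable def Qpoly (m : ℕ) : Polynomial ℚ :=
  Polynomial.C 2 + ∑ k ∈ Finset.Icc 1 m,
    Polynomial.C ((m : ℚ) / k * (Nat.choose (m + k - 1) (2 * k - 1))) * Polynomial.X ^ k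

/-- `𝒫_m(x) = Σ_{k=0}^{m} binom(m+k,2k)·x^k`. -/
noncomputable def calP (m : ℕ) : Polynomial ℚ :=
  ∑ k ∈ Finset.range (m + 1),
    Polynomial.C ((Nat.choose (m + k) (2 * k) : ℚ)) * Polynomial.X ^ k

/-- `𝒬_m(x) = Σ_{k=0}^{m} binom(m+k+1,2k+1)·x^k`. -/
noncomputable def calQ (m : ℕ) : Polynomial ℚ :=
  ∑ k ∈ Finset.range (m + 1),
    Polynomial.C ((Nat.choose (m + k + 1) (2 * k + 1) : ℚ)) * Polynomial.X ^ k

lemma coeff_calP (m k : ℕ) : (calP m).coeff k = (Nat.choose (m + k) (2 * k) : ℚ) := by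
  simp only [calP, finsetSum_coeff, coeff_C_mul_X_pow, Finset.sum_ite_eq, Finset.mem_range]
  split_ifs with h
  · rfl
  · rw [Nat.choose_eq_zero_of_lt (by omega)]; simp

lemma coeff_calQ (m k : ℕ) : (calQ m).coeff k = (Nat.choose (m + k + 1) (2 * k + 1) : ℚ) := by
  simp only [calQ, finsetSum_coeff, coeff_C_mul_X_pow, Finset.sum_ite_eq, Finset.mem_range]
  split_ifs with h
  · rfl
  · rw [Nat.choose_eq_zero_of_lt (by omega)]; simp

lemma coeff_Ppoly (m k : ℕ) : (Ppoly m).coeff k =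
    (2 * m + 1 : ℚ) / (2 * k + 1) * (Nat.choose (m + k) (2 * k)) := by
  simp only [Ppoly, finsetSum_coeff, coeff_C_mul_X_pow, Finset.sum_ite_eq, Finset.mem_range]
  split_ifs with h
  · rfl
  · rw [Nat.choose_eq_zero_of_lt (by omega)]; simp

lemma coeff_Qpoly_zero (m : ℕ) : (Qpoly m).coeff 0 = 2 := by
  simp only [Qpoly, coeff_add, finsetSum_coeff, coeff_C_mul_X_pow, Finset.sum_ite_eq,
    Finset.mem_Icc]
  simp

lemma coeff_Qpoly_succ (m k : ℕ) : (Qpoly m).coeff (k + 1) =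
    (m : ℚ) / (k + 1) * (Nat.choose (m + k) (2 * k + 1)) := by
  simp only [Qpoly, coeff_add, finsetSum_coeff, coeff_C_mul_X_pow, Finset.sum_ite_eq,
    Finset.mem_Icc, coeff_C_succ, zero_add]
  split_ifs with h
  · rw [show m + (k + 1) - 1 = m + k by omega, show 2 * (k + 1) - 1 = 2 * k + 1 by omega]
    push_cast; rfl
  · rw [Nat.choose_eq_zero_of_lt (by omega)]; simp

/-- Absorption in the rationals, valid without size conditions. -/
lemma choose_absorb (n k : ℕ) :
    (Nat.choose n (k + 1) : ℚ) * (k + 1) = Nat.choose n k * ((n : ℚ) - k) := by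
  rcases le_or_gt k n with h | h
  · have := Nat.choose_succ_right_eq n k
    have h2 : ((n - k : ℕ) : ℚ) = (n : ℚ) - k := Nat.cast_sub h
    rw [← h2]; exact_mod_cast this
  · rw [Nat.choose_eq_zero_of_lt h, Nat.choose_eq_zero_of_lt (by omega)]; simp

lemma Ppoly_zero : Ppoly 0 = 1 := by simp [Ppoly]
lemma Qpoly_zero : Qpoly 0 = 2 := by simp [Qpoly]; rfl
lemma calP_zero : calP 0 = 1 := by simp [calP]
lemma calQ_zero : calQ 0 = 1 := by simp [calQ]

lemma calQ_succ (n : ℕ) : calQ (n + 1) = calP (n + 1) + calQ n := by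
  ext k
  rw [coeff_add, coeff_calQ, coeff_calP, coeff_calQ, Nat.choose_succ_succ,
    show n + 1 + k = n + k + 1 by ring]
  push_cast; rfl

lemma X_mul_calQ (n : ℕ) : X * calQ n = calP (n + 1) - calP n := by
  ext k
  rcases k with _ | k
  · simp [coeff_calP]
  · rw [coeff_sub, coeff_X_mul, coeff_calQ, coeff_calP, coeff_calP,
      show n + 1 + (k + 1) = (n + k + 1) + 1 by ring, show 2 * (k + 1) = (2 * k + 1) + 1 by ring,
      Nat.choose_succ_succ (n + k + 1) (2 * k + 1), show n + (k + 1) = n + k + 1 by ring]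
    push_cast; ring

lemma Ppoly_succ (n : ℕ) : Ppoly (n + 1) = calQ (n + 1) + calQ n := by
  ext k
  rw [coeff_add, coeff_Ppoly, coeff_calQ, coeff_calQ, Nat.choose_succ_succ,
    show n + 1 + k = n + k + 1 by ring]
  have h := choose_absorb (n + k + 1) (2 * k)
  have hk : (2 * k + 1 : ℚ) ≠ 0 := by positivity
  push_cast at h ⊢
  field_simp
  linear_combination (-2) * h

lemma Qpoly_succ (n : ℕ) : Qpoly (n + 1) = calP (n + 1) + calP n := by
  ext k
  rcases k with _ | k
  · simp [coeff_Qpoly_zero, coeff_calP]; norm_num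
  · rw [coeff_add, coeff_Qpoly_succ, coeff_calP, coeff_calP,
      show n + 1 + (k + 1) = (n + k + 1) + 1 by ring, show 2 * (k + 1) = (2 * k + 1) + 1 by ring,
      Nat.choose_succ_succ, show n + (k + 1) = n + k + 1 by ring,
      show n + 1 + k = n + k + 1 by ring]
    have h := choose_absorb (n + k + 1) (2 * k + 1)
    have hk : (k + 1 : ℚ) ≠ 0 := by positivity
    push_cast at h ⊢
    field_simp
    linear_combination -h

lemma Qpoly_eq (n : ℕ) : Qpoly (n + 1) = Ppoly (n + 1) - Ppoly n := by
  rcases n with _ | n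
  · rw [Qpoly_succ, Ppoly_succ, calQ_succ, Ppoly_zero, calP_zero, calQ_zero]; ring
  · rw [Qpoly_succ, Ppoly_succ, Ppoly_succ, calQ_succ (n + 1), calQ_succ n]; ring

lemma X_mul_Ppoly (n : ℕ) : X * Ppoly n = Qpoly (n + 1) - Qpoly n := by
  rcases n with _ | n
  · have h := X_mul_calQ 0
    rw [calQ_zero] at h
    rw [Ppoly_zero, h, Qpoly_succ, Qpoly_zero, calP_zero]; ring
  · rw [Ppoly_succ, mul_add, X_mul_calQ, X_mul_calQ, Qpoly_succ, Qpoly_succ]; ring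

lemma Ppoly_rec (n : ℕ) : Ppoly (n + 2) = (X + 2) * Ppoly (n + 1) - Ppoly n := by
  linear_combination -Qpoly_eq (n + 1) + Qpoly_eq n - X_mul_Ppoly (n + 1)

lemma calP_rec (n : ℕ) : calP (n + 2) = (X + 2) * calP (n + 1) - calP n := by
  linear_combination X * calQ_succ n - X_mul_calQ (n + 1) + X_mul_calQ n

lemma calP_comp (m : ℕ) : calP m = (-1) ^ m * (Ppoly m).comp (-4 - X) := by
  induction m using Nat.twoStepInduction with
  | zero => simp [calP_zero, Ppoly_zero]
  | one =>
    have h := X_mul_calQ 0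
    have h2 := Ppoly_succ 0
    have h3 := calQ_succ 0
    rw [calQ_zero] at h h2 h3
    rw [calP_zero] at h
    have h4 : calP 1 = X + 1 := by linear_combination -h
    have h5 : Ppoly 1 = X + 1 + 1 + 1 := by
      simp only [zero_add] at h2 h3
      rw [h2, h3, h4]
    rw [h4, h5]
    simp only [add_comp, X_comp, one_comp]
    ring
  | more n h1 h2 =>
    rw [calP_rec, Ppoly_rec, h1, h2]
    simp only [sub_comp, mul_comp, add_comp, X_comp, ofNat_comp]
    ring

theorem stmt_3 (m : ℕ) (hm : 0 < m) :
    Qpoly m = Ppoly m - Ppoly (m - 1) ∧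
    Polynomial.X * Ppoly (m - 1) = Qpoly m - Qpoly (m - 1) ∧
    calQ m = calP m + calQ (m - 1) ∧
    Polynomial.X * calQ (m - 1) = calP m - calP (m - 1) ∧
    calP m = (-1) ^ m * (Ppoly m).comp (-4 - Polynomial.X) ∧
    (2 * m + 1 : ℚ) • calP m = Ppoly m + 2 * Polynomial.X * (Ppoly m).derivative := by
  obtain ⟨n, rfl⟩ : ∃ n, m = n + 1 := ⟨m - 1, by omega⟩
  rw [Nat.add_sub_cancel]
  refine ⟨Qpoly_eq n, X_mul_Ppoly n, calQ_succ n, X_mul_calQ n, calP_comp _, ?_⟩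
  ext k
  rw [show (2 : ℚ[X]) = C 2 from rfl, mul_assoc, coeff_smul, coeff_add, coeff_C_mul, smul_eq_mul]
  rcases k with _ | k
  · rw [coeff_X_mul_zero, coeff_Ppoly, coeff_calP]; simp
  · rw [coeff_X_mul, coeff_derivative, coeff_Ppoly, coeff_calP]
    have hk : (2 * (k + 1) + 1 : ℚ) ≠ 0 := by positivity
    push_cast
    field_simp
    ring
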